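/- If n = h + d where h and d are positive integers (so n > h > 0), then (h/n)^n > exp(−d − d²/h). -/

import Mathlib

/-! With `x = d / h`, the base is `h / n = (x + 1)⁻¹`, and the tangent line bound `x + 1 < exp x`
gives `exp (-x) < h / n`. Raise this to the power `n`, where `-x * n = -d - d ^ 2 / h`. -/

theorem exp_neg_lt_inv_add_one {x : ℝ} (hx : -1 < x) (hx₀ : x ≠ 0) :
    Real.exp (-x) < (x + 1)⁻¹ := by
  rw [Real.exp_neg]
  exact inv_strictAnti₀ (by linarith) (Real.add_one_lt_exp hx₀)

theorem exp_neg_div_lt_div_add {h d : ℝ} (hh : 0 < h) (hd : d ≠ 0) (hhd : 0 < h + d) :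
    Real.exp (-(d / h)) < h / (h + d) := by
  have hx : -1 < d / h := by
    rw [lt_div_iff₀ hh]
    linarith
  calc
    Real.exp (-(d / h)) < (d / h + 1)⁻¹ := exp_neg_lt_inv_add_one hx (div_ne_zero hd hh.ne')
    _ = h / (h + d) := by rw [div_add_one hh.ne', inv_div, add_comm]

theorem hn_pow_gt_exp_general (h d n : ℝ) (hh : 0 < h) (hd : d ≠ 0) (hn₀ : 0 < n)
    (hn : n = h + d) : (h / n) ^ n > Real.exp (-d - d ^ 2 / h) := by
  have exponent_eq : -d - d ^ 2 / h = -(d / h) * n := by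
    rw [hn]
    field_simp
    ring
  have base_lt : Real.exp (-(d / h)) < h / n := by
    subst hn
    exact exp_neg_div_lt_div_add hh hd hn₀
  calc
    Real.exp (-d - d ^ 2 / h) = Real.exp (-(d / h)) ^ n := by rw [exponent_eq, Real.exp_mul]
    _ < (h / n) ^ n := Real.rpow_lt_rpow (Real.exp_pos _).le base_lt hn₀

/-- If `n = h + d` where `h` and `d` are positive integers, then
`(h/n)^n > exp(−d − d²/h)`. -/
theorem hn_pow_gt_exp (h d n : ℕ) (hh : 0 < h) (hd : 0 < d) (hn : n = h + d) :
    ((h : ℝ) / (n : ℝ)) ^ n > Real.exp (-(d : ℝ) - (d : ℝ) ^ 2 / (h : ℝ)) := by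
  exact_mod_cast hn_pow_gt_exp_general h d n (mod_cast hh) (mod_cast hd.ne') (mod_cast (by lia))
    (mod_cast hn)
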